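/- For every monotone, convex, regular, tight set H ⊆ L⁰_{b-} which is closed under liminf and contains the constant function 0, one has H = H°°. -/

import Mathlib

/-! The inclusion `H ⊆ H°°` is immediate. For the converse, closedness under `liminf` reduces the
claim to bounded Borel `F`: every such `F` that no member of `H` dominates must be separated from
`H` by a measure in the polar (`exists_polar_separating`).

Hahn–Banach is only available against continuous functions, so `F` is first replaced by a smaller
function. Tightness provides compact sets `K n` such that `F` may be replaced by a negative constant
off `⋃ n, K n` without becoming dominated (`dom_of_dom_cutOff`). The σ-compact set `⋃ n, K n` is the
image of Baire space under a continuous map along which `F` becomes continuous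
(`exists_baire_param`). A capacitability argument, with non-domination by `H` in the role of
positive capacity, then finds a compact `L` on which `F` is continuous such that no continuous
function strictly above the cut-off of `F` at `L` is dominated by `H` (`exists_compact_not_dom`).
Going down along boxes of Baire space uses only closedness under `liminf`; the passage to the limit
box uses continuity of the majorant.

These majorants form an open convex subset of `C(βΩ)`, disjoint from the convex set of functions
dominated by `H`. Since `H` contains `0` and is monotone, the separating functional can be
normalized to a positive one, and tightness concentrates it on `⋃ n, K n`, so that the Riesz theorem
on `βΩ` yields a Borel probability measure `μ` on `Ω` (`exists_measure_of_tight`,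
`exists_separating_measure`). It satisfies `∫ v dμ ≤ c` for bounded continuous `v` dominated by `H`,
while `∫ F dμ > c`, the strict inequality coming from applying the above to `F - a` for a small
`a > 0`.

Regularity extends the bound by `c` to bounded upper semicontinuous members of `H`, inner regularity
of `μ` to truncations of members of `H`, and monotone convergence to all of `H`
(`smul_mem_polar`). As `c ≥ 0`, a suitable multiple of `μ` lies in the polar and has
`∫ F dμ > 1`. -/

open MeasureTheory Filter ENNReal NNReal

/-- Positive part of an extended real number, as an element of `[0,∞]`. -/
noncomputable def ERealPosPart (x : EReal) : ℝ≥0∞ :=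
  if x = ⊤ then ⊤ else ENNReal.ofReal x.toReal

section Defs

variable {Ω : Type*} [TopologicalSpace Ω] [MeasurableSpace Ω]

/-- The pairing `⟨f,μ⟩ = ∫ f dμ` for an extended-real-valued function `f`; for `f` bounded
from below and `μ` a finite measure this is the usual (extended-valued) integral. -/
noncomputable def ePair (f : Ω → EReal) (μ : Measure Ω) : EReal :=
  ((∫⁻ x, ERealPosPart (f x) ∂μ : ℝ≥0∞) : EReal) -
    ((∫⁻ x, ERealPosPart (-f x) ∂μ : ℝ≥0∞) : EReal)

/-- `L⁰_{b-}`: the set of Borel measurable functions `Ω → ℝ ∪ {+∞}` which are bounded from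
below (modelled as `EReal`-valued functions bounded below by a real constant). -/
def L0b : Set (Ω → EReal) :=
  {f | Measurable f ∧ ∃ c : ℝ, ∀ x, (c : EReal) ≤ f x}

/-- `H ⊆ L⁰_{b-}` is monotone: `f ∈ H` whenever `f ∈ L⁰_{b-}` satisfies `f ≤ h` for some
`h ∈ H`. -/
def MonotoneB (H : Set (Ω → EReal)) : Prop :=
  ∀ f ∈ L0b, (∃ h ∈ H, ∀ x, f x ≤ h x) → f ∈ H

/-- `H` is normalized: the constant function `0` belongs to `H` and no constant
function `ε > 0` belongs to `H`. -/
def NormalizedB (H : Set (Ω → EReal)) : Prop :=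
  (fun _ => (0 : EReal)) ∈ H ∧ ∀ ε : ℝ, 0 < ε → (fun _ => (ε : EReal)) ∉ H

/-- `H` is tight: for every constant `m ∈ ℝ` with `m ∈ H`, every `n ∈ ℕ` and `ε > 0` there
is a compact `K ⊆ Ω` with `m − ε + n·1_{Kᶜ} ∈ H`. -/
def TightB (H : Set (Ω → EReal)) : Prop :=
  ∀ m : ℝ, (fun _ => (m : EReal)) ∈ H → ∀ n : ℕ, ∀ ε : ℝ, 0 < ε →
    ∃ K : Set Ω, IsCompact K ∧
      (fun x => (m : EReal) - (ε : EReal) + (Kᶜ).indicator (fun _ => (n : EReal)) x) ∈ H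

/-- `H` is closed under `liminf`: `liminf_n h_n ∈ H` for every sequence `(h_n)` in `H`
with `h_n ≥ c` for some constant `c ∈ ℝ`. -/
def LiminfClosedB (H : Set (Ω → EReal)) : Prop :=
  ∀ h : ℕ → Ω → EReal, (∀ n, h n ∈ H) → (∃ c : ℝ, ∀ n x, (c : EReal) ≤ h n x) →
    (fun x => liminf (fun n => h n x) atTop) ∈ H

/-- `H` is convex. -/
def ConvexB (H : Set (Ω → EReal)) : Prop :=
  ∀ f ∈ H, ∀ g ∈ H, ∀ t : ℝ, 0 ≤ t → t ≤ 1 →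
    (fun x => (t : EReal) * f x + ((1 - t : ℝ) : EReal) * g x) ∈ H

/-- `h` is (the coercion of) a bounded continuous real-valued function. -/
def IsCbB (h : Ω → EReal) : Prop :=
  Continuous h ∧ ∃ C : ℝ, ∀ x, -(C : EReal) ≤ h x ∧ h x ≤ (C : EReal)

/-- `h` is (the coercion of) a bounded upper semicontinuous real-valued function. -/
def IsUbB (h : Ω → EReal) : Prop :=
  UpperSemicontinuous h ∧ ∃ C : ℝ, ∀ x, -(C : EReal) ≤ h x ∧ h x ≤ (C : EReal)

/-- `H` is regular: for every Borel probability measure `μ`, the supremum of `⟨h,μ⟩` over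
`H ∩ U_b` coincides with the supremum over `H ∩ C_b`. -/
def RegularB (H : Set (Ω → EReal)) : Prop :=
  ∀ μ : Measure Ω, IsProbabilityMeasure μ →
    sSup {x : EReal | ∃ h ∈ H, IsUbB h ∧ x = ePair h μ} =
      sSup {x : EReal | ∃ h ∈ H, IsCbB h ∧ x = ePair h μ}

/-- The polar `H°` of `H ⊆ L⁰_{b-}`: all finite positive Borel measures `μ` with
`⟨f,μ⟩ ≤ 1` for all `f ∈ H`. -/
def polarB (H : Set (Ω → EReal)) : Set (Measure Ω) :=
  {μ | IsFiniteMeasure μ ∧ ∀ f ∈ H, ePair f μ ≤ 1}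

/-- The bipolar `H°°` of `H ⊆ L⁰_{b-}`. -/
def bipolarB (H : Set (Ω → EReal)) : Set (Ω → EReal) :=
  {f | f ∈ L0b ∧ ∀ μ ∈ polarB H, ePair f μ ≤ 1}

/-- The superhedging functional `φ(f) = inf{m ∈ ℝ : m + h ≥ f for some h ∈ H}` (the
infimum of the empty set being `+∞`). -/
noncomputable def sprice (H : Set (Ω → EReal)) (f : Ω → EReal) : EReal :=
  sInf ((fun m : ℝ => (m : EReal)) ''
    {m : ℝ | ∃ h ∈ H, ∀ x, f x ≤ (m : EReal) + h x})

end Defs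

/-! ### Domination, cut-offs and capacitability -/

section Aux

variable {Ω : Type*}

/-- `f` is dominated by some member of `H`. For `f ∈ L⁰_{b-}` and monotone `H` this is `f ∈ H`, but
the notion makes sense for functions that are not measurable. -/
def Dom (H : Set (Ω → EReal)) (f : Ω → EReal) : Prop :=
  ∃ h ∈ H, ∀ x, f x ≤ h x

theorem Dom.of_le_liminf {H : Set (Ω → EReal)} (hl : LiminfClosedB H) {f : ℕ → Ω → EReal}
    {g : Ω → EReal} {c : ℝ} (hf : ∀ n, Dom H (f n)) (hc : ∀ n x, (c : EReal) ≤ f n x)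
    (hg : ∀ x, g x ≤ liminf (fun n => f n x) atTop) : Dom H g := by
  choose h hH hle using hf
  refine ⟨_, hl h hH ⟨c, fun n x => (hc n x).trans (hle n x)⟩, fun x => (hg x).trans ?_⟩
  exact liminf_le_liminf (Eventually.of_forall fun n => hle n x)

open Classical in
/-- The function equal to `F` on `A` and to the constant `-C` off `A`. -/
noncomputable def cutOff (C : ℝ) (F : Ω → ℝ) (A : Set Ω) : Ω → ℝ :=
  A.piecewise F fun _ => -C

theorem cutOff_mem {C : ℝ} {F : Ω → ℝ} {A : Set Ω} {x : Ω} (h : x ∈ A) :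
    cutOff C F A x = F x := by simp [cutOff, h]

theorem cutOff_not_mem {C : ℝ} {F : Ω → ℝ} {A : Set Ω} {x : Ω} (h : x ∉ A) :
    cutOff C F A x = -C := by simp [cutOff, h]

theorem neg_le_cutOff {C : ℝ} {F : Ω → ℝ} (hF : ∀ x, -C ≤ F x) (A : Set Ω) (x : Ω) :
    -C ≤ cutOff C F A x := by
  by_cases h : x ∈ A
  · rw [cutOff_mem h]; exact hF x
  · rw [cutOff_not_mem h]

theorem cutOff_le {C : ℝ} {F : Ω → ℝ} (hF : ∀ x, -C ≤ F x) (A : Set Ω) (x : Ω) :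
    cutOff C F A x ≤ F x := by
  by_cases h : x ∈ A
  · rw [cutOff_mem h]
  · rw [cutOff_not_mem h]; exact hF x

/-- One step of the capacitability argument: `{σ ∈ N | σ k ≤ j}` increases to `N` as `j → ∞`. -/
theorem exists_bound_coord {H : Set (Ω → EReal)} (hl : LiminfClosedB H) {C : ℝ} {F : Ω → ℝ}
    (hF : ∀ x, -C ≤ F x) (p : (ℕ → ℕ) → Ω) (N : Set (ℕ → ℕ)) (k : ℕ)
    (hN : ¬ Dom H fun x => (cutOff C F (p '' N) x : EReal)) :
    ∃ j : ℕ, ¬ Dom H fun x => (cutOff C F (p '' (N ∩ {σ | σ k ≤ j})) x : EReal) := by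
  by_contra! hcon
  refine hN (Dom.of_le_liminf hl (c := -C) hcon
    (fun n x => EReal.coe_le_coe_iff.2 (neg_le_cutOff hF _ _)) fun x => ?_)
  by_cases h : x ∈ p '' N
  · obtain ⟨σ, hσ, rfl⟩ := h
    refine le_liminf_of_le (by isBoundedDefault) ?_
    filter_upwards [eventually_ge_atTop (σ k)] with j hj
    rw [cutOff_mem (Set.mem_image_of_mem p hσ),
      cutOff_mem (Set.mem_image_of_mem p (show σ ∈ N ∩ {σ | σ k ≤ j} from ⟨hσ, hj⟩))]
  · rw [cutOff_not_mem h]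
    exact le_liminf_of_le (by isBoundedDefault) (Eventually.of_forall fun j =>
      EReal.coe_le_coe_iff.2 (neg_le_cutOff hF _ _))

/-- Boxes bounded in the first `k` coordinates shrink to the compact box bounded in all of them. -/
theorem exists_box_subset (a : ℕ → ℕ) {O : Set (ℕ → ℕ)} (hO : IsOpen O)
    (hL : {σ : ℕ → ℕ | ∀ i, σ i ≤ a i} ⊆ O) : ∃ k, {σ : ℕ → ℕ | ∀ i < k, σ i ≤ a i} ⊆ O := by
  by_contra! hcon
  have hcon' : ∀ k, ∃ σ : ℕ → ℕ, (∀ i < k, σ i ≤ a i) ∧ σ ∉ O := fun k => by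
    obtain ⟨σ, h1, h2⟩ := Set.not_subset.1 (hcon k)
    exact ⟨σ, h1, h2⟩
  choose σ hσ hσO using hcon'
  have hcpt : IsCompact (Set.univ.pi fun i => Set.Iic (a i)) :=
    isCompact_univ_pi fun i => (Set.finite_Iic (a i)).isCompact
  obtain ⟨τ, hτ, φ, hφ, hlim⟩ := hcpt.tendsto_subseq (x := fun k i => min (σ k i) (a i))
    (fun k i _ => Set.mem_Iic.2 (min_le_right _ _))
  have hlim' : Tendsto (fun k => σ (φ k)) atTop (nhds τ) := by
    rw [tendsto_pi_nhds] at hlim ⊢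
    intro i
    refine (hlim i).congr' ?_
    filter_upwards [eventually_gt_atTop i] with k hk
    exact min_eq_left (hσ _ i (hk.trans_le (hφ.le_apply)))
  obtain ⟨k, hk⟩ := (hlim'.eventually (hO.mem_nhds (hL fun i => hτ i trivial))).exists
  exact hσO _ hk

/-- Capacitability: a cut-off `F` on the continuous image of Baire space that is not dominated by
`H` has a compact subset of that image such that no continuous function strictly above the
corresponding cut-off is dominated by `H`. -/
theorem exists_compact_not_dom [TopologicalSpace Ω] [T2Space Ω] {H : Set (Ω → EReal)}
    (hl : LiminfClosedB H) {C : ℝ} {F : Ω → ℝ} (hF : ∀ x, -C ≤ F x) {p : (ℕ → ℕ) → Ω}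
    (hp : Continuous p) (hFp : Continuous (F ∘ p))
    (hnot : ¬ Dom H fun x => (cutOff C F (Set.range p) x : EReal)) :
    ∃ L : Set Ω, IsCompact L ∧ L.Nonempty ∧ ContinuousOn F L ∧
      ∀ u : Ω → ℝ, Continuous u → (∀ x, cutOff C F L x < u x) →
        ¬ Dom H fun x => (u x : EReal) := by
  choose! J hJ using fun (N : Set (ℕ → ℕ)) (k : ℕ) => exists_bound_coord hl hF p N k
  -- `N k` is the box bounded by `a` in the first `k` coordinates, whose image is not yet dominated.
  let N : ℕ → Set (ℕ → ℕ) := fun k => Nat.rec Set.univ (fun k M => M ∩ {σ | σ k ≤ J M k}) k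
  let a : ℕ → ℕ := fun k => J (N k) k
  have hNs : ∀ k, N (k + 1) = N k ∩ {σ | σ k ≤ a k} := fun k => rfl
  have hN : ∀ k, ¬ Dom H fun x => (cutOff C F (p '' N k) x : EReal) := by
    intro k
    induction k with
    | zero => simpa [N] using hnot
    | succ k ih => exact hJ _ _ ih
  have hNbox : ∀ k, N k = {σ | ∀ i < k, σ i ≤ a i} := by
    intro k
    induction k with
    | zero => simp [N]
    | succ k ih =>
      rw [hNs, ih]
      ext σ
      simp only [Set.mem_inter_iff, Set.mem_ofPred_eq, Nat.lt_succ_iff_lt_or_eq]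
      exact ⟨fun h i hi => hi.elim (h.1 i) fun e => e ▸ h.2,
        fun h => ⟨fun i hi => h i (Or.inl hi), h k (Or.inr rfl)⟩⟩
  have hbox : {σ : ℕ → ℕ | ∀ i, σ i ≤ a i} = Set.univ.pi fun i => Set.Iic (a i) := by
    ext σ; simp only [Set.mem_ofPred_eq, Set.mem_univ_pi, Set.mem_Iic]
  have hcpt : IsCompact {σ : ℕ → ℕ | ∀ i, σ i ≤ a i} := by
    rw [hbox]
    exact isCompact_univ_pi fun i => (Set.finite_Iic (a i)).isCompact
  refine ⟨p '' {σ | ∀ i, σ i ≤ a i}, hcpt.image hp, ⟨p 0, 0, fun i => Nat.zero_le _, rfl⟩, ?_, ?_⟩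
  · rw [continuousOn_iff_isClosed]
    intro Z hZ
    refine ⟨p '' ({σ | ∀ i, σ i ≤ a i} ∩ (F ∘ p) ⁻¹' Z),
      ((hcpt.inter_right (hZ.preimage hFp)).image hp).isClosed, ?_⟩
    ext x
    constructor
    · rintro ⟨hx, σ, hσ, rfl⟩
      exact ⟨⟨σ, ⟨hσ, hx⟩, rfl⟩, ⟨σ, hσ, rfl⟩⟩
    · rintro ⟨⟨σ, hσ, rfl⟩, hx⟩
      exact ⟨hσ.2, hx⟩
  · rintro u hu hlt ⟨h, hH, hle⟩
    obtain ⟨k, hk⟩ := exists_box_subset a (O := {σ | F (p σ) < u (p σ)})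
      (isOpen_lt hFp (hu.comp hp)) (fun σ hσ => by
        have := hlt (p σ)
        rwa [cutOff_mem (Set.mem_image_of_mem p hσ)] at this)
    refine hN k ⟨h, hH, fun x => le_trans (EReal.coe_le_coe_iff.2 ?_) (hle x)⟩
    by_cases hx : x ∈ p '' N k
    · rw [cutOff_mem hx]
      obtain ⟨σ, hσ, rfl⟩ := hx
      rw [hNbox] at hσ
      exact (hk hσ).le
    · rw [cutOff_not_mem hx]
      exact (neg_le_cutOff hF _ x).trans (hlt x).le

/-- A Borel function on a Polish space becomes continuous after a continuous parametrization by
Baire space. -/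
theorem exists_baire_param [TopologicalSpace Ω] [MeasurableSpace Ω] [BorelSpace Ω]
    {T : Type*} [TopologicalSpace T] [PolishSpace T] [Nonempty T] {q : T → Ω} (hq : Continuous q)
    {F : Ω → ℝ} (hF : Measurable F) :
    ∃ p : (ℕ → ℕ) → Ω, Continuous p ∧ Continuous (F ∘ p) ∧ Set.range p = Set.range q := by
  let _ : MeasurableSpace T := borel T
  have _ : BorelSpace T := ⟨rfl⟩
  obtain ⟨t', hle, hcont, hpol⟩ := (hF.comp hq.measurable).exists_continuous
  obtain ⟨e, he, hes⟩ := @PolishSpace.exists_nat_nat_continuous_surjective T t' hpol _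
  refine ⟨q ∘ e, ?_, ?_, hes.range_comp q⟩
  · exact @Continuous.comp _ _ _ _ t' _ _ _ (continuous_le_dom hle hq) he
  · exact @Continuous.comp _ _ _ _ t' _ _ _ hcont he

end Aux

/-! ### Tight functionals on the Stone–Čech compactification -/

section Riesz

open scoped Topology

/-- Riesz representation for tight functionals: a normalized positive functional on `C(βΩ)` which
is concentrated on a sequence of compact subsets of `Ω` is integration against a probability
measure on `Ω`. -/
theorem exists_measure_of_tight {Ω : Type*} [MetricSpace Ω] [MeasurableSpace Ω] [BorelSpace Ω]
    (Λ : C(StoneCech Ω, ℝ) →ₗ[ℝ] ℝ) (hpos : ∀ v, 0 ≤ v → 0 ≤ Λ v) (h1 : Λ 1 = 1)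
    (K : ℕ → Set Ω) (hK : ∀ n, IsCompact (K n)) (d : ℝ)
    (htight : ∀ (n : ℕ) (w : C(StoneCech Ω, ℝ)), 0 ≤ w → w ≤ 1 →
      (∀ x ∈ K n, w (stoneCechUnit x) = 0) → Λ w ≤ d / (n + 1)) :
    ∃ μ : Measure Ω, IsProbabilityMeasure μ ∧
      ∀ v : C(StoneCech Ω, ℝ), ∫ x, v (stoneCechUnit x) ∂μ = Λ v := by
  let _ : MeasurableSpace (StoneCech Ω) := borel _
  have _ : BorelSpace (StoneCech Ω) := ⟨rfl⟩
  let Λ' : CompactlySupportedContinuousMap (StoneCech Ω) ℝ →ₚ[ℝ] ℝ := PositiveLinearMap.mk₀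
    { toFun := fun g => Λ g.toContinuousMap
      map_add' := fun f g => Λ.map_add f.toContinuousMap g.toContinuousMap
      map_smul' := fun c g => Λ.map_smul c g.toContinuousMap }
    (fun g hg => hpos _ hg)
  let toC : C(StoneCech Ω, ℝ) → CompactlySupportedContinuousMap (StoneCech Ω) ℝ :=
    fun g => ⟨g, HasCompactSupport.of_compactSpace _⟩
  let ν := RealRMK.rieszMeasure Λ'
  have hν : ∀ v : C(StoneCech Ω, ℝ), ∫ y, v y ∂ν = Λ v :=
    fun v => RealRMK.integral_rieszMeasure Λ' (toC v)
  have hνreg : ν.Regular := inferInstanceAs (RealRMK.rieszMeasure Λ').Regular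
  have hνfin : IsFiniteMeasure ν := inferInstanceAs (IsFiniteMeasure (RealRMK.rieszMeasure Λ'))
  have hνuniv : ν Set.univ = 1 := by
    have := hν 1
    rw [h1] at this
    simp only [ContinuousMap.one_apply, integral_const, smul_eq_mul, mul_one] at this
    rw [measureReal_def, ← ENNReal.toReal_one] at this
    exact (ENNReal.toReal_eq_toReal_iff' (measure_ne_top _ _) ENNReal.one_ne_top).1 this
  have hKc : ∀ n, IsCompact (stoneCechUnit '' K n) := fun n =>
    (hK n).image continuous_stoneCechUnit
  have hsmall : ∀ n, ν (stoneCechUnit '' K n)ᶜ ≤ ENNReal.ofReal (d / (n + 1)) := by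
    intro n
    rw [(hKc n).isClosed.isOpen_compl.measure_eq_iSup_isCompact]
    refine iSup₂_le fun Z hZ => iSup_le fun hZc => ?_
    obtain ⟨w, hw0, hw1, hw⟩ := exists_continuous_zero_one_of_isClosed (hKc n).isClosed hZc.isClosed
      (Set.disjoint_left.2 fun y hy hyZ => hZ hyZ hy)
    refine (RealRMK.rieszMeasure_le_of_eq_one Λ' (f := toC w) (fun x => (hw x).1) hZc
      (fun x hx => hw1 hx)).trans (ENNReal.ofReal_le_ofReal ?_)
    exact htight n w (fun x => (hw x).1) (fun x => (hw x).2) fun x hx => hw0 ⟨x, hx, rfl⟩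
  let S : Set Ω := ⋃ n, K n
  have hSr : Set.range (fun s : S => (stoneCechUnit (s : Ω) : StoneCech Ω)) =
      ⋃ n, stoneCechUnit '' K n := by
    ext y; simp [S, Set.mem_iUnion]; tauto
  have hnull : ν (Set.range fun s : S => (stoneCechUnit (s : Ω) : StoneCech Ω))ᶜ = 0 := by
    refine le_antisymm (ge_of_tendsto' (x := atTop)
      (f := fun n : ℕ => ENNReal.ofReal (d / (n + 1))) ?_ fun n => ?_) bot_le
    · rw [← ENNReal.ofReal_zero]
      refine ENNReal.tendsto_ofReal ?_
      exact tendsto_const_div_atTop_nhds_zero_nat d |>.comp (tendsto_add_atTop_nat 1) |>.congr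
        fun n => by simp
    · refine (measure_mono ?_).trans (hsmall n)
      rw [hSr]
      exact Set.compl_subset_compl.2 (Set.subset_iUnion (fun n => stoneCechUnit '' K n) n)
  have hemb : MeasurableEmbedding (fun s : S => (stoneCechUnit (s : Ω) : StoneCech Ω)) := by
    refine (isEmbedding_stoneCechUnit.comp Topology.IsEmbedding.subtypeVal).measurableEmbedding ?_
    change MeasurableSet (Set.range fun s : S => (stoneCechUnit (s : Ω) : StoneCech Ω))
    rw [hSr]
    exact MeasurableSet.iUnion fun n => (hKc n).isClosed.measurableSet
  have hne : Nonempty Ω := by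
    by_contra hne
    rw [not_nonempty_iff] at hne
    have : (Set.range fun s : S => (stoneCechUnit (s : Ω) : StoneCech Ω)) = ∅ := by
      rw [Set.range_eq_empty_iff]
      exact ⟨fun s => hne.elim s⟩
    rw [this, Set.compl_empty, hνuniv] at hnull
    exact one_ne_zero hnull
  -- A measurable left inverse on the relevant part of `βΩ`, used to transport `ν` back to `Ω`.
  obtain ⟨r, hr, hrS⟩ := hemb.exists_measurable_extend measurable_subtype_coe fun _ => hne
  have hmap : ∀ v : C(StoneCech Ω, ℝ), ∫ x, v (stoneCechUnit x) ∂(ν.map r) = Λ v := by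
    intro v
    have hm : AEStronglyMeasurable (fun x => v (stoneCechUnit x)) (ν.map r) :=
      (v.continuous.comp continuous_stoneCechUnit).measurable.aestronglyMeasurable
    rw [integral_map hr.aemeasurable hm, ← hν v]
    refine integral_congr_ae ?_
    filter_upwards [mem_ae_iff.2 hnull] with y hy
    obtain ⟨s, rfl⟩ := hy
    have := congrFun hrS s
    simp only [Function.comp] at this
    simp only [this]
  exact ⟨ν.map r, ⟨by rw [Measure.map_apply hr MeasurableSet.univ, Set.preimage_univ, hνuniv]⟩, hmap⟩

theorem exists_stoneCech_extension {Ω : Type*} [TopologicalSpace Ω] {w : Ω → ℝ} (hw : Continuous w)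
    {C : ℝ} (hC : ∀ x, |w x| ≤ C) : ∃ v : C(StoneCech Ω, ℝ), ∀ x, v (stoneCechUnit x) = w x := by
  let w' : Ω → Set.Icc (-C) C := fun x => ⟨w x, abs_le.1 (hC x)⟩
  have hw' : Continuous w' := hw.subtype_mk _
  exact ⟨⟨fun y => ((stoneCechExtend hw' y : Set.Icc (-C) C) : ℝ),
    continuous_subtype_val.comp (continuous_stoneCechExtend hw')⟩, fun x => by
      simp [stoneCechExtend_stoneCechUnit, w']⟩

end Riesz

/-! ### The extended pairing and truncations -/

section Pairing

variable {Ω : Type*}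

/-- The truncation `min (h, n)` as a real function. -/
noncomputable def truncReal (h : Ω → EReal) (n : ℕ) (x : Ω) : ℝ := (min (h x) (n : ℝ)).toReal

theorem coe_truncReal {h : Ω → EReal} {β : ℝ} (hβ : ∀ x, ((-β : ℝ) : EReal) ≤ h x) (n : ℕ)
    (x : Ω) : (truncReal h n x : EReal) = min (h x) (n : ℝ) := by
  refine EReal.coe_toReal (ne_of_lt ((min_le_right _ _).trans_lt (EReal.coe_lt_top _))) ?_
  exact ne_of_gt (lt_min ((EReal.bot_lt_coe _).trans_le (hβ x)) (EReal.bot_lt_coe _))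

theorem abs_truncReal_le {h : Ω → EReal} {β : ℝ} (h0 : 0 ≤ β)
    (hβ : ∀ x, ((-β : ℝ) : EReal) ≤ h x) (n : ℕ) (x : Ω) : |truncReal h n x| ≤ β + n := by
  have hn : (0 : ℝ) ≤ n := n.cast_nonneg
  have h1 : -β ≤ truncReal h n x := by
    rw [← EReal.coe_le_coe_iff, coe_truncReal hβ]
    exact le_min (hβ x) (EReal.coe_le_coe_iff.2 (by linarith))
  have h2 : truncReal h n x ≤ n := by
    rw [← EReal.coe_le_coe_iff, coe_truncReal hβ]
    exact min_le_right _ _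
  exact abs_le.2 ⟨by linarith, by linarith⟩

variable [MeasurableSpace Ω]

theorem ERealPosPart_coe (r : ℝ) : ERealPosPart (r : EReal) = ENNReal.ofReal r := by
  simp [ERealPosPart]

theorem ERealPosPart_mono : Monotone ERealPosPart := by
  intro a b hab
  induction b with
  | top => simp [ERealPosPart]
  | bot => rw [le_bot_iff.1 hab]
  | coe b =>
    induction a with
    | top => exact absurd (top_le_iff.1 hab) (EReal.coe_ne_top b)
    | bot => simp [ERealPosPart]
    | coe a =>
      rw [ERealPosPart_coe, ERealPosPart_coe]
      exact ENNReal.ofReal_le_ofReal (EReal.coe_le_coe_iff.1 hab)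

theorem ePair_mono {f g : Ω → EReal} (hfg : ∀ x, f x ≤ g x) (μ : Measure Ω) :
    ePair f μ ≤ ePair g μ := by
  refine EReal.sub_le_sub ?_ ?_
  · exact EReal.coe_ennreal_le_coe_ennreal_iff.2
      (lintegral_mono fun x => ERealPosPart_mono (hfg x))
  · exact EReal.coe_ennreal_le_coe_ennreal_iff.2
      (lintegral_mono fun x => ERealPosPart_mono (EReal.neg_le_neg_iff.2 (hfg x)))

theorem ePair_coe {F : Ω → ℝ} {μ : Measure Ω} (hF : Integrable F μ) :
    ePair (fun x => (F x : EReal)) μ = ((∫ x, F x ∂μ : ℝ) : EReal) := by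
  have h1 : (∫⁻ x, ENNReal.ofReal (F x) ∂μ) ≠ ⊤ := hF.lintegral_lt_top.ne
  have h2 : (∫⁻ x, ENNReal.ofReal (-F x) ∂μ) ≠ ⊤ := hF.neg.lintegral_lt_top.ne
  rw [integral_eq_lintegral_pos_part_sub_lintegral_neg_part hF, EReal.coe_sub,
    EReal.coe_ennreal_toReal h1, EReal.coe_ennreal_toReal h2]
  simp only [ePair, ← EReal.coe_neg, ERealPosPart_coe]

theorem integrable_of_abs_le {F : Ω → ℝ} {μ : Measure Ω} [IsFiniteMeasure μ] (hF : Measurable F)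
    {C : ℝ} (hC : ∀ x, |F x| ≤ C) : Integrable F μ :=
  Integrable.of_bound hF.aestronglyMeasurable C (Eventually.of_forall hC)

theorem measurable_truncReal {h : Ω → EReal} (hm : Measurable h) (n : ℕ) :
    Measurable (truncReal h n) :=
  (hm.min measurable_const).ereal_toReal

theorem exists_nonneg_lower_bound {h : Ω → EReal} (hh : h ∈ L0b) :
    ∃ β : ℝ, 0 ≤ β ∧ ∀ x, ((-β : ℝ) : EReal) ≤ h x := by
  obtain ⟨-, c, hc⟩ := hh
  refine ⟨|c|, abs_nonneg c, fun x => le_trans (EReal.coe_le_coe_iff.2 ?_) (hc x)⟩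
  linarith [neg_abs_le c]

/-- Inner regularity of finite Borel measures: a bound on the integrals of all bounded upper
semicontinuous minorants passes to a bounded Borel function. -/
theorem integral_le_of_forall_usc [TopologicalSpace Ω] [BorelSpace Ω] {μ : Measure Ω}
    [IsFiniteMeasure μ] [μ.WeaklyRegular] {G : Ω → ℝ} (hG : Measurable G) {C d : ℝ}
    (hC : ∀ x, |G x| ≤ C)
    (hd : ∀ g : Ω → ℝ, UpperSemicontinuous g → (∀ x, |g x| ≤ C) → (∀ x, g x ≤ G x) →
      ∫ x, g x ∂μ ≤ d) : ∫ x, G x ∂μ ≤ d := by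
  let f : Ω → ℝ≥0 := fun x => (G x + C).toNNReal
  have hfG : ∀ x, (f x : ℝ) = G x + C := fun x =>
    Real.coe_toNNReal _ (by linarith [(abs_le.1 (hC x)).1])
  have hfm : Measurable f := (hG.add_const C).real_toNNReal
  have hfi : Integrable (fun x => (f x : ℝ)) μ := by
    simp only [hfG]
    exact (integrable_of_abs_le hG hC).add (integrable_const C)
  have hflt : (∫⁻ x, f x ∂μ) ≠ ⊤ := by
    have := hfi.lintegral_lt_top.ne
    simpa using this
  refine le_of_forall_pos_le_add fun ε hε => ?_
  obtain ⟨g, hgf, hgu, hg⟩ := exists_upperSemicontinuous_le_lintegral_le f hflt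
    (ε := ENNReal.ofReal ε) (by simpa using hε)
  have hglt : (∫⁻ x, g x ∂μ) ≠ ⊤ :=
    ne_top_of_le_ne_top hflt (lintegral_mono fun x => ENNReal.coe_le_coe.2 (hgf x))
  have hgm : Measurable g := hgu.measurable
  have hgf' : ∀ x, (g x : ℝ) ≤ G x + C := fun x => by rw [← hfG]; exact hgf x
  have hgi : Integrable (fun x => (g x : ℝ)) μ :=
    hfi.mono' hgm.coe_nnreal_real.aestronglyMeasurable
      (Eventually.of_forall fun x => by simpa using hgf x)
  have key : ∫ x, (f x : ℝ) ∂μ ≤ ∫ x, (g x : ℝ) ∂μ + ε := by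
    rw [integral_eq_lintegral_of_nonneg_ae (Eventually.of_forall fun x => (f x).coe_nonneg)
        hfi.aestronglyMeasurable,
      integral_eq_lintegral_of_nonneg_ae (Eventually.of_forall fun x => (g x).coe_nonneg)
        hgi.aestronglyMeasurable]
    simp only [ENNReal.ofReal_coe_nnreal]
    have := ENNReal.toReal_mono (ENNReal.add_ne_top.2 ⟨hglt, ENNReal.ofReal_ne_top⟩) hg
    rwa [ENNReal.toReal_add hglt ENNReal.ofReal_ne_top, ENNReal.toReal_ofReal hε.le] at this
  have husc : UpperSemicontinuous fun x => (g x : ℝ) - C := by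
    intro x y hy
    have h1 : (g x : ℝ) < y + C := by linarith
    have h2 : g x < (y + C).toNNReal := by
      rw [← NNReal.coe_lt_coe, Real.coe_toNNReal _ ((g x).coe_nonneg.trans h1.le)]; exact h1
    filter_upwards [hgu x _ h2] with z hz
    rw [← NNReal.coe_lt_coe, Real.coe_toNNReal _ ((g x).coe_nonneg.trans h1.le)] at hz
    linarith
  have hle := hd _ husc (fun x => abs_le.2 ⟨by linarith [(g x).coe_nonneg],
    by linarith [hgf' x, (abs_le.1 (hC x)).2]⟩) (fun x => by linarith [hgf' x])
  rw [integral_sub hgi (integrable_const C)] at hle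
  have hGeq : ∫ x, G x ∂μ = ∫ x, (f x : ℝ) ∂μ - ∫ _, C ∂μ := by
    rw [← integral_sub hfi (integrable_const C)]
    simp only [hfG, add_sub_cancel_right]
  linarith

/-- A bound on the integrals of all truncations passes to the extended pairing, by monotone
convergence. -/
theorem ePair_le_of_forall_trunc {μ : Measure Ω} [IsFiniteMeasure μ] {h : Ω → EReal}
    (hm : Measurable h) {β d : ℝ} (h0 : 0 ≤ β) (hβ : ∀ x, ((-β : ℝ) : EReal) ≤ h x)
    (hd : ∀ n, ∫ x, truncReal h n x ∂μ ≤ d) : ePair h μ ≤ d := by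
  have hintegral : ∀ n, Integrable (truncReal h n) μ := fun n =>
    integrable_of_abs_le (measurable_truncReal hm n) (abs_truncReal_le h0 hβ n)
  have hneg : ∀ n x, ERealPosPart (-h x) = ENNReal.ofReal (-truncReal h n x) := by
    intro n x
    have hc := coe_truncReal hβ n x
    rcases le_total (h x) ((n : ℝ) : EReal) with hle | hle
    · rw [min_eq_left hle] at hc
      rw [← hc, ← EReal.coe_neg, ERealPosPart_coe]
    · rw [min_eq_right hle, EReal.coe_eq_coe_iff] at hc
      have h1 : ERealPosPart (-h x) ≤ 0 := by
        have := ERealPosPart_mono (EReal.neg_le_neg_iff.2 hle)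
        rwa [← EReal.coe_neg, ERealPosPart_coe, ENNReal.ofReal_of_nonpos (by simp)] at this
      rw [le_antisymm h1 bot_le, hc, ENNReal.ofReal_of_nonpos (by simp)]
  have hNtop : (∫⁻ x, ERealPosPart (-h x) ∂μ) ≠ ⊤ := by
    simp only [hneg 0]
    exact (hintegral 0).neg.lintegral_lt_top.ne
  set N := (∫⁻ x, ERealPosPart (-h x) ∂μ) with hN
  have hpos : ∀ n, (∫⁻ x, ENNReal.ofReal (truncReal h n x) ∂μ) ≤ ENNReal.ofReal (d + N.toReal) := by
    intro n
    have h1 := hd n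
    rw [integral_eq_lintegral_pos_part_sub_lintegral_neg_part (hintegral n)] at h1
    simp only [← hneg n, ← hN] at h1
    rw [← ENNReal.ofReal_toReal (hintegral n).lintegral_lt_top.ne]
    exact ENNReal.ofReal_le_ofReal (by linarith)
  have hsup : ∀ x, ERealPosPart (h x) ≤ ⨆ n, ENNReal.ofReal (truncReal h n x) := by
    intro x
    by_cases htop : h x = ⊤
    · have : ∀ n, truncReal h n x = n := fun n => by
        rw [truncReal, htop, min_eq_right le_top, EReal.toReal_coe]
      simp only [this, ENNReal.ofReal_natCast, ENNReal.iSup_natCast]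
      exact le_top
    · obtain ⟨n, hn⟩ := exists_nat_ge (h x).toReal
      refine le_iSup_of_le n ?_
      have hcoe : ((h x).toReal : EReal) = h x :=
        EReal.coe_toReal htop (ne_of_gt ((EReal.bot_lt_coe _).trans_le (hβ x)))
      have : (truncReal h n x : EReal) = h x := by
        rw [coe_truncReal hβ, min_eq_left]
        rw [← hcoe]; exact EReal.coe_le_coe_iff.2 hn
      rw [← ERealPosPart_coe, this]
  have hP : (∫⁻ x, ERealPosPart (h x) ∂μ) ≤ ENNReal.ofReal (d + N.toReal) := by
    refine (lintegral_mono hsup).trans ?_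
    rw [lintegral_iSup (fun n => (measurable_truncReal hm n).ennreal_ofReal)]
    · exact iSup_le hpos
    · intro n m hnm x
      refine ENNReal.ofReal_le_ofReal ?_
      rw [← EReal.coe_le_coe_iff, coe_truncReal hβ, coe_truncReal hβ]
      exact min_le_min le_rfl (EReal.coe_le_coe_iff.2 (Nat.cast_le.2 hnm))
  have hdN : 0 ≤ d + N.toReal := by
    have h1 := hd 0
    rw [integral_eq_lintegral_pos_part_sub_lintegral_neg_part (hintegral 0)] at h1
    simp only [← hneg 0, ← hN] at h1
    have : 0 ≤ (∫⁻ x, ENNReal.ofReal (truncReal h 0 x) ∂μ).toReal := ENNReal.toReal_nonneg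
    linarith
  have hNe : ((N : ℝ≥0∞) : EReal) = ((N.toReal : ℝ) : EReal) :=
    (EReal.coe_ennreal_toReal hNtop).symm
  calc ePair h μ ≤ ((ENNReal.ofReal (d + N.toReal) : ℝ≥0∞) : EReal) - (N : EReal) :=
        EReal.sub_le_sub (EReal.coe_ennreal_le_coe_ennreal_iff.2 hP) le_rfl
    _ = d := by
        rw [EReal.coe_ennreal_ofReal, max_eq_left hdN, hNe, ← EReal.coe_sub, add_sub_cancel_right]

end Pairing

/-! ### Tightness and separation -/

section Separation

theorem Dom.convex {Ω : Type*} {H : Set (Ω → EReal)} (hconv : ConvexB H) {f g : Ω → ℝ}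
    (hf : Dom H fun x => (f x : EReal)) (hg : Dom H fun x => (g x : EReal)) {t : ℝ} (h0 : 0 ≤ t)
    (h1 : t ≤ 1) : Dom H fun x => ((t * f x + (1 - t) * g x : ℝ) : EReal) := by
  obtain ⟨h, hH, hle⟩ := hf
  obtain ⟨k, kH, kle⟩ := hg
  refine ⟨_, hconv h hH k kH t h0 h1, fun x => ?_⟩
  show ((t * f x + (1 - t) * g x : ℝ) : EReal) ≤ _
  rw [EReal.coe_add, EReal.coe_mul, EReal.coe_mul]
  exact add_le_add (mul_le_mul_of_nonneg_left (hle x) (EReal.coe_nonneg.2 h0))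
    (mul_le_mul_of_nonneg_left (kle x) (EReal.coe_nonneg.2 (sub_nonneg.2 h1)))

/-- Compact sets `K n` such that `H` dominates functions that are at most `-1` on `K n` and of size
`n²` off `K n`. The quadratic growth makes the mass `1 / (n + 1)` available for the mixtures in
`dom_of_dom_cutOff` and for the tightness bound in `exists_separating_measure`. -/
theorem exists_compact_seq {Ω : Type*} [TopologicalSpace Ω] {H : Set (Ω → EReal)}
    (htight : TightB H) (hzero : (fun _ => (0 : EReal)) ∈ H) :
    ∃ K : ℕ → Set Ω, (∀ n, IsCompact (K n)) ∧ ∀ (n : ℕ) (w : Ω → ℝ), (∀ x ∈ K n, w x ≤ -1) →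
      (∀ x, w x ≤ -1 + ((n : ℝ) + 1) ^ 2) → Dom H fun x => (w x : EReal) := by
  have h := fun n : ℕ => htight 0 (by simpa using hzero) ((n + 1) ^ 2) 1 one_pos
  choose K hK hKH using h
  refine ⟨K, hK, fun n w hw1 hw2 => ⟨_, hKH n, fun x => ?_⟩⟩
  by_cases hx : x ∈ K n
  · rw [Set.indicator_of_notMem (by simpa using hx)]
    have := EReal.coe_le_coe_iff.2 (hw1 x hx)
    simpa using this
  · rw [Set.indicator_of_mem (by simpa using hx)]
    have := EReal.coe_le_coe_iff.2 (hw2 x)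
    refine this.trans (le_of_eq ?_)
    have hcast : (((n + 1) ^ 2 : ℕ) : EReal) = ((((n : ℝ) + 1) ^ 2 : ℝ) : EReal) := by
      rw [← EReal.coe_natCast]
      push_cast
      rfl
    rw [hcast, EReal.coe_add]
    simp

/-- The complement of the σ-compact set `⋃ n, K n` is negligible for `H`: mixing the function of
size `n²` off `K n` with weight `1 / (n + 1)` into the cut-off gives functions whose `liminf` is at
least `F`. -/
theorem dom_of_dom_cutOff {Ω : Type*} {H : Set (Ω → EReal)} (hconv : ConvexB H)
    (hl : LiminfClosedB H) {K : ℕ → Set Ω}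
    (hK : ∀ (n : ℕ) (w : Ω → ℝ), (∀ x ∈ K n, w x ≤ -1) →
      (∀ x, w x ≤ -1 + ((n : ℝ) + 1) ^ 2) → Dom H fun x => (w x : EReal))
    {C : ℝ} {F : Ω → ℝ} (hF : ∀ x, |F x| ≤ C)
    (h : Dom H fun x => (cutOff C F (⋃ n, K n) x : EReal)) : Dom H fun x => (F x : EReal) := by
  classical
  let w : ℕ → Ω → ℝ := fun n x => if x ∈ K n then -1 else -1 + ((n : ℝ) + 1) ^ 2
  have hw : ∀ n, Dom H fun x => (w n x : EReal) := fun n => hK n (w n)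
    (fun x hx => by simp [w, hx]) fun x => by
      by_cases hx : x ∈ K n
      · simp only [w, hx, if_true]; nlinarith [sq_nonneg ((n : ℝ) + 1)]
      · simp [w, hx]
  have hw1 : ∀ n x, -1 ≤ w n x := fun n x => by
    by_cases hx : x ∈ K n
    · simp [w, hx]
    · simp only [w, hx, if_false]; nlinarith [sq_nonneg ((n : ℝ) + 1)]
  have hF' : ∀ x, -C ≤ F x := fun x => (abs_le.1 (hF x)).1
  have hs0 : ∀ n : ℕ, 0 < 1 / ((n : ℝ) + 1) := fun n => by positivity
  have hs1 : ∀ n : ℕ, 1 / ((n : ℝ) + 1) ≤ 1 := fun n => by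
    rw [div_le_one (by positivity)]; linarith [n.cast_nonneg (α := ℝ)]
  have hCne : ∀ x : Ω, 0 ≤ C := fun x => (abs_nonneg _).trans (hF x)
  refine Dom.of_le_liminf hl (c := -C - 1)
    (fun n => Dom.convex hconv (hw n) h (hs0 n).le (hs1 n)) (fun n x => ?_) fun x => ?_
  · refine EReal.coe_le_coe_iff.2 ?_
    have h1 := neg_le_cutOff hF' (⋃ n, K n) x
    nlinarith [hw1 n x, hs0 n, hs1 n, hCne x, mul_nonneg (hs0 n).le (hCne x)]
  · have hlim : Tendsto (fun n : ℕ => ((F x - 1 / ((n : ℝ) + 1) * (C + 1) : ℝ) : EReal)) atTop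
        (nhds (F x : EReal)) := by
      refine (continuous_coe_real_ereal.tendsto _).comp ?_
      have := (tendsto_one_div_add_atTop_nhds_zero_nat (𝕜 := ℝ)).mul_const (C + 1)
      simpa using this.const_sub (F x)
    rw [← hlim.liminf_eq]
    refine liminf_le_liminf ?_
    obtain ⟨M, hM⟩ := exists_nat_ge (2 * C + 1)
    filter_upwards [eventually_ge_atTop M] with n hn
    refine EReal.coe_le_coe_iff.2 ?_
    have hs := hs0 n
    have hx1 := (abs_le.1 (hF x)).2
    by_cases hx : x ∈ ⋃ n, K n
    · rw [cutOff_mem hx]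
      nlinarith [hw1 n x, mul_le_mul_of_nonneg_left (hw1 n x) hs.le]
    · have hxn : x ∉ K n := fun hx' => hx (Set.mem_iUnion.2 ⟨n, hx'⟩)
      rw [cutOff_not_mem hx]
      simp only [w, hxn, if_false]
      have h2 : 1 / ((n : ℝ) + 1) * ((n : ℝ) + 1) ^ 2 = (n : ℝ) + 1 := by field_simp
      have h3 : (M : ℝ) ≤ n := Nat.cast_le.2 hn
      nlinarith [mul_nonneg hs.le (hCne x), hs1 n]

/-- Separation: a measure whose integral is at most `c` on the bounded continuous functions
dominated by `H`, and at least `c` at an upper semicontinuous function none of whose strict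
continuous majorants is dominated by `H`. -/
theorem exists_separating_measure {Ω : Type*} [MetricSpace Ω] [MeasurableSpace Ω] [BorelSpace Ω]
    {H : Set (Ω → EReal)} (hconv : ConvexB H) (hzero : (fun _ => (0 : EReal)) ∈ H)
    {K : ℕ → Set Ω} (hKc : ∀ n, IsCompact (K n))
    (hK : ∀ (n : ℕ) (w : Ω → ℝ), (∀ x ∈ K n, w x ≤ -1) →
      (∀ x, w x ≤ -1 + ((n : ℝ) + 1) ^ 2) → Dom H fun x => (w x : EReal))
    {C : ℝ} {F : Ω → ℝ} (hF : ∀ x, |F x| ≤ C) {L : Set Ω} (hL : IsCompact L) (hLne : L.Nonempty)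
    (hFL : ContinuousOn F L)
    (hnot : ∀ u : Ω → ℝ, Continuous u → (∀ x, cutOff C F L x < u x) →
      ¬ Dom H fun x => (u x : EReal)) :
    ∃ (μ : Measure Ω) (c : ℝ), IsProbabilityMeasure μ ∧
      (∀ v : Ω → ℝ, Continuous v → (∃ D, ∀ x, |v x| ≤ D) → (Dom H fun x => (v x : EReal)) →
        ∫ x, v x ∂μ ≤ c) ∧
      c ≤ ∫ x, cutOff C F L x ∂μ := by
  have hF' : ∀ x, -C ≤ F x := fun x => (abs_le.1 (hF x)).1
  -- Bounded continuous functions on `Ω` are the elements of `C(βΩ)`; the uniform gap `ε` makes the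
  -- set of majorants open.
  let A : Set C(StoneCech Ω, ℝ) :=
    {u | ∃ ε > 0, ∀ x, cutOff C F L x + ε ≤ u (stoneCechUnit x)}
  let B : Set C(StoneCech Ω, ℝ) := {v | Dom H fun x => (v (stoneCechUnit x) : EReal)}
  have hAconv : Convex ℝ A := by
    rintro u ⟨ε, hε, hu⟩ v ⟨δ, hδ, hv⟩ s t hs ht hst
    refine ⟨min ε δ, lt_min hε hδ, fun x => ?_⟩
    have h1 : cutOff C F L x + min ε δ ≤ u (stoneCechUnit x) :=
      (add_le_add_right (min_le_left _ _) _).trans (hu x)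
    have h2 : cutOff C F L x + min ε δ ≤ v (stoneCechUnit x) :=
      (add_le_add_right (min_le_right _ _) _).trans (hv x)
    calc cutOff C F L x + min ε δ = (s + t) * (cutOff C F L x + min ε δ) := by rw [hst, one_mul]
      _ ≤ s * u (stoneCechUnit x) + t * v (stoneCechUnit x) := by
        rw [add_mul]
        exact add_le_add (mul_le_mul_of_nonneg_left h1 hs) (mul_le_mul_of_nonneg_left h2 ht)
  have hAopen : IsOpen A := by
    rw [Metric.isOpen_iff]
    rintro u ⟨ε, hε, hu⟩
    refine ⟨ε / 2, half_pos hε, fun v hv => ⟨ε / 2, half_pos hε, fun x => ?_⟩⟩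
    have h1 : dist (v (stoneCechUnit x)) (u (stoneCechUnit x)) < ε / 2 :=
      (ContinuousMap.dist_apply_le_dist _).trans_lt hv
    rw [Real.dist_eq] at h1
    linarith [hu x, (abs_lt.1 h1).1]
  have hBconv : Convex ℝ B := by
    intro u hu v hv s t hs ht hst
    have := Dom.convex hconv hu hv hs (by linarith)
    rw [← hst, add_sub_cancel_left] at this
    exact this
  have hdisj : Disjoint A B := by
    rw [Set.disjoint_left]
    rintro u ⟨ε, hε, hu⟩ huB
    exact hnot _ (u.continuous.comp continuous_stoneCechUnit) (fun x => by
      have := hu x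
      simp only [Function.comp]
      linarith) huB
  obtain ⟨ℓ, c₀, hℓA, hℓB⟩ := geometric_hahn_banach_open hAconv hAopen hBconv hdisj
  have hBneg : ∀ v : C(StoneCech Ω, ℝ), v ≤ 0 → v ∈ B := fun v hv =>
    ⟨_, hzero, fun x => by simpa using hv (stoneCechUnit x)⟩
  have hc₀ : c₀ ≤ 0 := by simpa using hℓB 0 (hBneg 0 le_rfl)
  have hℓneg : ∀ v : C(StoneCech Ω, ℝ), 0 ≤ v → ℓ v ≤ 0 := by
    intro v hv
    by_contra! hpos
    obtain ⟨n, hn⟩ := exists_nat_gt (-c₀ / ℓ v)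
    have h1 := hℓB (-((n : ℝ) • v)) (hBneg _ fun y => by
      have : 0 ≤ v y := hv y
      simpa using mul_nonneg n.cast_nonneg this)
    rw [map_neg, map_smul, smul_eq_mul] at h1
    rw [div_lt_iff₀ hpos] at hn
    linarith
  have hcut : ∀ x, |cutOff C F L x| ≤ C := fun x => abs_le.2
    ⟨neg_le_cutOff hF' L x, (cutOff_le hF' L x).trans (abs_le.1 (hF x)).2⟩
  have hCnn : 0 ≤ C := (abs_nonneg _).trans (hF hLne.some)
  have hℓ1 : ℓ 1 < 0 := by
    have h1 := hℓA ((C + 1) • 1) ⟨1, one_pos, fun x => by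
      simpa using (abs_le.1 (hcut x)).2⟩
    rw [map_smul, smul_eq_mul] at h1
    nlinarith
  -- The separating functional is negative, so dividing by its value at `1` normalizes it and
  -- makes it positive.
  let Λ : C(StoneCech Ω, ℝ) →ₗ[ℝ] ℝ := (ℓ 1)⁻¹ • (ℓ : C(StoneCech Ω, ℝ) →ₗ[ℝ] ℝ)
  have hΛ : ∀ v, Λ v = (ℓ 1)⁻¹ * ℓ v := fun v => rfl
  have hinv : (ℓ 1)⁻¹ < 0 := inv_lt_zero.2 hℓ1
  set c := (ℓ 1)⁻¹ * c₀ with hc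
  have hΛB : ∀ v ∈ B, Λ v ≤ c := fun v hv => by
    rw [hΛ]; exact mul_le_mul_of_nonpos_left (hℓB v hv) hinv.le
  have hΛA : ∀ v ∈ A, c ≤ Λ v := fun v hv => by
    rw [hΛ]; exact mul_le_mul_of_nonpos_left (hℓA v hv).le hinv.le
  have hΛ1 : Λ 1 = 1 := by rw [hΛ]; exact inv_mul_cancel₀ hℓ1.ne
  have hcnn : 0 ≤ c := mul_nonneg_of_nonpos_of_nonpos hinv.le hc₀
  obtain ⟨μ, hμ, hintegral⟩ := exists_measure_of_tight Λ
    (fun v hv => by rw [hΛ]; exact mul_nonneg_of_nonpos_of_nonpos hinv.le (hℓneg v hv))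
    hΛ1 K hKc (c + 1) (fun n w hw0 hw1 hwK => by
      have h1 := hΛB (-1 + ((n : ℝ) + 1) ^ 2 • w) (hK n _ (fun x hx => by simp [hwK x hx])
        fun x => by
          have : w (stoneCechUnit x) ≤ 1 := hw1 _
          have := mul_le_mul_of_nonneg_left this (sq_nonneg ((n : ℝ) + 1))
          simpa using this)
      rw [map_add, map_neg, map_smul, hΛ1, smul_eq_mul] at h1
      have h2 : 0 ≤ Λ w := by
        rw [hΛ]; exact mul_nonneg_of_nonpos_of_nonpos hinv.le (hℓneg w hw0)
      rw [le_div_iff₀ (by positivity)]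
      nlinarith [n.cast_nonneg (α := ℝ), mul_nonneg h2 (n.cast_nonneg (α := ℝ)),
        mul_nonneg (mul_nonneg h2 (n.cast_nonneg (α := ℝ))) (n.cast_nonneg (α := ℝ))])
  refine ⟨μ, c, hμ, ?_, ?_⟩
  · rintro v hv ⟨D, hD⟩ hdom
    obtain ⟨v', hv'⟩ := exists_stoneCech_extension hv hD
    have := hΛB v' (by simpa only [B, Set.mem_ofPred_eq, hv'] using hdom)
    rw [← hintegral v'] at this
    simpa only [hv'] using this
  · obtain ⟨G, hGC, hGF⟩ := ContinuousMap.exists_restrict_eq_forall_mem_of_closed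
      (s := L) ⟨L.domRestrict F, hFL.domRestrict⟩ (t := Set.Icc (-C) C)
      (fun x => abs_le.1 (hF x)) ⟨0, by simpa using hCnn⟩ hL.isClosed
    have hGL : ∀ x ∈ L, G x = F x := fun x hx => DFunLike.congr_fun hGF ⟨x, hx⟩
    -- Continuous functions decreasing to the cut-off of `F` at `L`.
    let θ : ℕ → Ω → ℝ := fun k x => max 0 (1 - k * Metric.infDist x L)
    let u : ℕ → Ω → ℝ := fun k x => -C + (G x + C) * θ k x + 1 / ((k : ℝ) + 1)
    have hθ0 : ∀ k x, 0 ≤ θ k x := fun k x => le_max_left _ _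
    have hθ1 : ∀ k x, θ k x ≤ 1 := fun k x => max_le zero_le_one (by
      have := mul_nonneg k.cast_nonneg (Metric.infDist_nonneg (x := x) (s := L)) (α := ℝ)
      linarith)
    have hG0 : ∀ x, 0 ≤ G x + C := fun x => by linarith [(hGC x).1]
    have hG1 : ∀ x, G x + C ≤ 2 * C := fun x => by linarith [(hGC x).2]
    have hθL : ∀ k, ∀ x ∈ L, θ k x = 1 := fun k x hx => by
      simp [θ, Metric.infDist_zero_of_mem hx]
    have hucont : ∀ k, Continuous (u k) := fun k => by
      have : Continuous fun x => Metric.infDist x L := Metric.continuous_infDist_pt L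
      fun_prop
    have hs0 : ∀ k : ℕ, 0 < 1 / ((k : ℝ) + 1) := fun k => by positivity
    have hs1 : ∀ k : ℕ, 1 / ((k : ℝ) + 1) ≤ 1 := fun k => by
      rw [div_le_one (by positivity)]; linarith [k.cast_nonneg (α := ℝ)]
    have hubd : ∀ (k : ℕ) (x : Ω), |u k x| ≤ C + 1 := fun k x => by
      have h1 := mul_nonneg (hG0 x) (hθ0 k x)
      have h2 : (G x + C) * θ k x ≤ 2 * C :=
        (mul_le_of_le_one_right (hG0 x) (hθ1 k x)).trans (hG1 x)
      exact abs_le.2 ⟨by simp only [u]; linarith [hs0 k], by simp only [u]; linarith [hs1 k]⟩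
    have hucut : ∀ (k : ℕ) (x : Ω), cutOff C F L x + 1 / ((k : ℝ) + 1) ≤ u k x := fun k x => by
      by_cases hx : x ∈ L
      · rw [cutOff_mem hx]; simp only [u, hθL k x hx, hGL x hx]; linarith
      · rw [cutOff_not_mem hx]; simp only [u]; linarith [mul_nonneg (hG0 x) (hθ0 k x)]
    have hcu : ∀ k, c ≤ ∫ x, u k x ∂μ := fun k => by
      obtain ⟨v, hv⟩ := exists_stoneCech_extension (hucont k) (hubd k)
      have := hΛA v ⟨_, hs0 k, fun x => by rw [hv]; exact hucut k x⟩
      rw [← hintegral v] at this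
      simpa only [hv] using this
    have hlim : ∀ x, Tendsto (fun k => u k x) atTop (nhds (cutOff C F L x)) := fun x => by
      have hz := tendsto_one_div_add_atTop_nhds_zero_nat (𝕜 := ℝ)
      by_cases hx : x ∈ L
      · have : ∀ k, u k x = cutOff C F L x + 1 / ((k : ℝ) + 1) := fun k => by
          rw [cutOff_mem hx]; simp only [u, hθL k x hx, hGL x hx]; ring
        simp only [this]
        simpa using hz.const_add (cutOff C F L x)
      · have hd : 0 < Metric.infDist x L :=
          (hL.isClosed.notMem_iff_infDist_pos hLne).1 hx
        obtain ⟨M, hM⟩ := exists_nat_ge (1 / Metric.infDist x L)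
        rw [div_le_iff₀ hd] at hM
        have : ∀ᶠ k : ℕ in atTop, cutOff C F L x + 1 / ((k : ℝ) + 1) = u k x := by
          filter_upwards [eventually_ge_atTop M] with k hk
          have h1 : (M : ℝ) ≤ k := Nat.cast_le.2 hk
          have h2 : θ k x = 0 := max_eq_left (by nlinarith)
          rw [cutOff_not_mem hx]; simp only [u, h2]; ring
        refine Tendsto.congr' this ?_
        simpa using hz.const_add (cutOff C F L x)
    exact ge_of_tendsto' (tendsto_integral_of_dominated_convergence (fun _ => C + 1)
      (fun k => (hucont k).measurable.aestronglyMeasurable) (integrable_const _)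
      (fun k => Eventually.of_forall (hubd k)) (Eventually.of_forall hlim)) hcu

end Separation

/-! ### Measures in the polar -/

section Main

variable {Ω : Type*}

theorem dom_of_forall_trunc {H : Set (Ω → EReal)} (hl : LiminfClosedB H) {f : Ω → EReal} {β : ℝ}
    (h0 : 0 ≤ β) (hβ : ∀ x, ((-β : ℝ) : EReal) ≤ f x)
    (h : ∀ n, Dom H fun x => (truncReal f n x : EReal)) : Dom H f := by
  refine Dom.of_le_liminf hl (c := -β) h (fun n x => ?_) fun x => ?_
  · rw [coe_truncReal hβ]
    refine le_min (hβ x) (EReal.coe_le_coe_iff.2 ?_)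
    linarith [n.cast_nonneg (α := ℝ)]
  · simp only [coe_truncReal hβ]
    have hlim : Tendsto (fun n : ℕ => ((n : ℝ) : EReal)) atTop (nhds ⊤) :=
      EReal.tendsto_coe_nhds_top_iff.2 tendsto_natCast_atTop_atTop
    have := (tendsto_const_nhds (x := f x) (f := (atTop : Filter ℕ))).min hlim
    rw [this.liminf_eq, min_eq_left le_top]

theorem exists_shift_not_dom {H : Set (Ω → EReal)} (hl : LiminfClosedB H) {F : Ω → ℝ} {C : ℝ}
    (hF : ∀ x, |F x| ≤ C) (h : ¬ Dom H fun x => (F x : EReal)) :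
    ∃ a : ℝ, 0 < a ∧ a ≤ 1 ∧ ¬ Dom H fun x => ((F x - a : ℝ) : EReal) := by
  by_contra! hcon
  have hs1 : ∀ k : ℕ, 1 / ((k : ℝ) + 1) ≤ 1 := fun k => by
    rw [div_le_one (by positivity)]; linarith [k.cast_nonneg (α := ℝ)]
  refine h (Dom.of_le_liminf hl (c := -C - 1)
    (fun k : ℕ => hcon (1 / ((k : ℝ) + 1)) (by positivity) (hs1 k)) (fun k x => ?_) fun x => ?_)
  · refine EReal.coe_le_coe_iff.2 ?_
    linarith [hs1 k, (abs_le.1 (hF x)).1]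
  · have hlim : Tendsto (fun k : ℕ => ((F x - 1 / ((k : ℝ) + 1) : ℝ) : EReal)) atTop
        (nhds (F x : EReal)) := by
      refine (continuous_coe_real_ereal.tendsto _).comp ?_
      simpa using (tendsto_one_div_add_atTop_nhds_zero_nat (𝕜 := ℝ)).const_sub (F x)
    exact hlim.liminf_eq.ge

/-- A σ-compact subset of a metric space is the image of a Polish space, namely the disjoint union of
the compact sets, hence of Baire space. -/
theorem exists_baire_param_sigmaCompact [MetricSpace Ω] [MeasurableSpace Ω] [BorelSpace Ω]
    {K : ℕ → Set Ω} (hK : ∀ n, IsCompact (K n)) (hne : (⋃ n, K n).Nonempty) {F : Ω → ℝ}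
    (hF : Measurable F) :
    ∃ p : (ℕ → ℕ) → Ω, Continuous p ∧ Continuous (F ∘ p) ∧ Set.range p = ⋃ n, K n := by
  have : ∀ n, CompactSpace (K n) := fun n => isCompact_iff_compactSpace.1 (hK n)
  have : ∀ n, PolishSpace (K n) := fun n => inferInstance
  have : PolishSpace (Σ n, K n) := ⟨⟩
  let q : (Σ n, K n) → Ω := fun y => y.2
  have hq : Continuous q := continuous_sigma fun n => continuous_subtype_val
  have hrange : Set.range q = ⋃ n, K n := by
    ext x
    simp only [Set.mem_range, Set.mem_iUnion, q]
    exact ⟨fun ⟨y, hy⟩ => ⟨y.1, hy ▸ y.2.2⟩, fun ⟨n, hn⟩ => ⟨⟨n, x, hn⟩, rfl⟩⟩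
  obtain ⟨x, hx⟩ := hne
  obtain ⟨n, hn⟩ := Set.mem_iUnion.1 hx
  have : Nonempty (Σ n, K n) := ⟨⟨n, x, hn⟩⟩
  rw [← hrange]
  exact exists_baire_param hq hF

/-- Regularity carries a bound from the continuous members of `H` to the upper semicontinuous
members. -/
theorem integral_usc_le_of_regular [TopologicalSpace Ω] [MeasurableSpace Ω] [BorelSpace Ω]
    {H : Set (Ω → EReal)} (hreg : RegularB H) {μ : Measure Ω} [hμ : IsProbabilityMeasure μ] {c : ℝ}
    (hc : ∀ v : Ω → ℝ, Continuous v → (∃ D, ∀ x, |v x| ≤ D) → (Dom H fun x => (v x : EReal)) →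
      ∫ x, v x ∂μ ≤ c)
    {g : Ω → ℝ} (hg : UpperSemicontinuous g) {C : ℝ} (hC : ∀ x, |g x| ≤ C)
    (hgH : (fun x => (g x : EReal)) ∈ H) : ∫ x, g x ∂μ ≤ c := by
  rw [← EReal.coe_le_coe_iff, ← ePair_coe (integrable_of_abs_le hg.measurable hC)]
  have hU : IsUbB fun x => (g x : EReal) := by
    refine ⟨?_, C, fun x => ⟨?_, EReal.coe_le_coe_iff.2 (abs_le.1 (hC x)).2⟩⟩
    · exact continuous_coe_real_ereal.comp_upperSemicontinuous hg
        fun a b hab => EReal.coe_le_coe_iff.2 hab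
    · rw [← EReal.coe_neg]
      exact EReal.coe_le_coe_iff.2 (abs_le.1 (hC x)).1
  refine (le_sSup (Set.mem_ofPred.2 ⟨_, hgH, hU, rfl⟩)).trans ((hreg μ hμ).le.trans (sSup_le ?_))
  rintro _ ⟨h, hH, ⟨hcont, D, hD⟩, rfl⟩
  have hbot : ∀ x, h x ≠ ⊥ := fun x => by
    have := (hD x).1
    rw [← EReal.coe_neg] at this
    exact ne_of_gt ((EReal.bot_lt_coe _).trans_le this)
  have htop : ∀ x, h x ≠ ⊤ := fun x => ne_of_lt ((hD x).2.trans_lt (EReal.coe_lt_top _))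
  have hcoe : ∀ x, ((h x).toReal : EReal) = h x := fun x => EReal.coe_toReal (htop x) (hbot x)
  have hvc : Continuous fun x => (h x).toReal := by
    refine EReal.continuousOn_toReal.comp_continuous hcont fun x => ?_
    simp [hbot x, htop x]
  have hvD : ∀ x, |(h x).toReal| ≤ D := fun x => by
    have h1 := hD x
    rw [← hcoe x, ← EReal.coe_neg, EReal.coe_le_coe_iff, EReal.coe_le_coe_iff] at h1
    exact abs_le.2 h1
  have heq : h = fun x => ((h x).toReal : EReal) := funext fun x => (hcoe x).symm
  rw [heq, ePair_coe (integrable_of_abs_le hvc.measurable hvD)]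
  exact EReal.coe_le_coe_iff.2 (hc _ hvc ⟨D, hvD⟩ ⟨h, hH, fun x => (hcoe x).le⟩)

/-- A multiple of a probability measure bounding the continuous functions dominated by `H` lies in
the polar. -/
theorem smul_mem_polar [MetricSpace Ω] [MeasurableSpace Ω] [BorelSpace Ω]
    {H : Set (Ω → EReal)} (hsub : H ⊆ L0b) (hmono : MonotoneB H) (hreg : RegularB H)
    {μ : Measure Ω} [IsProbabilityMeasure μ] {c : ℝ}
    (hc : ∀ v : Ω → ℝ, Continuous v → (∃ D, ∀ x, |v x| ≤ D) → (Dom H fun x => (v x : EReal)) →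
      ∫ x, v x ∂μ ≤ c)
    {t : ℝ} (ht : 0 ≤ t) (htc : t * c ≤ 1) : ENNReal.ofReal t • μ ∈ polarB H := by
  have hfin : IsFiniteMeasure (ENNReal.ofReal t • μ) := μ.smul_finite ENNReal.ofReal_ne_top
  refine ⟨hfin, fun h hH => ?_⟩
  obtain ⟨β, h0, hβ⟩ := exists_nonneg_lower_bound (hsub hH)
  have hm : Measurable h := (hsub hH).1
  have := ePair_le_of_forall_trunc (μ := ENNReal.ofReal t • μ) (d := 1) hm h0 hβ fun n => ?_
  · simpa using this
  · rw [integral_smul_measure, ENNReal.toReal_ofReal ht, smul_eq_mul]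
    refine (mul_le_mul_of_nonneg_left ?_ ht).trans htc
    refine integral_le_of_forall_usc (measurable_truncReal hm n) (abs_truncReal_le h0 hβ n)
      fun g hg hgC hgle => integral_usc_le_of_regular hreg hc hg hgC ?_
    refine hmono _ ⟨hg.measurable.coe_real_ereal, -(β + n),
      fun x => EReal.coe_le_coe_iff.2 (abs_le.1 (hgC x)).1⟩ ⟨h, hH, fun x => ?_⟩
    refine (EReal.coe_le_coe_iff.2 (hgle x)).trans ?_
    rw [coe_truncReal hβ]
    exact min_le_left _ _

/-- Every bounded Borel function that `H` does not dominate is separated from `H` by a measure in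
the polar. -/
theorem exists_polar_separating [MetricSpace Ω] [MeasurableSpace Ω] [BorelSpace Ω]
    {H : Set (Ω → EReal)} (hsub : H ⊆ L0b)
    (hmono : MonotoneB H) (hconv : ConvexB H)
    (hreg : RegularB H) (htight : TightB H)
    (hliminf : LiminfClosedB H) (hzero : (fun _ => (0 : EReal)) ∈ H)
    {F : Ω → ℝ} (hFm : Measurable F) {C : ℝ} (hF : ∀ x, |F x| ≤ C)
    (hnot : ¬ Dom H fun x => (F x : EReal)) :
    ∃ μ ∈ polarB H, 1 < ePair (fun x => (F x : EReal)) μ := by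
  obtain ⟨a, ha0, ha1, hna⟩ := exists_shift_not_dom hliminf hF hnot
  have hF₁m : Measurable fun x => F x - a := hFm.sub_const a
  have hF₁ : ∀ x, |F x - a| ≤ C + 1 := fun x => by
    have := abs_le.1 (hF x)
    exact abs_le.2 ⟨by linarith, by linarith⟩
  have hF₁' : ∀ x, -(C + 1) ≤ F x - a := fun x => (abs_le.1 (hF₁ x)).1
  obtain ⟨K, hKc, hK⟩ := exists_compact_seq htight hzero
  have hcutK := mt (dom_of_dom_cutOff hconv hliminf hK hF₁) hna
  have hne : (⋃ n, K n).Nonempty := by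
    rw [Set.nonempty_iff_ne_empty]
    intro he
    refine hcutK ⟨_, hzero, fun x => ?_⟩
    have h1 : 0 ≤ C := (abs_nonneg _).trans (hF x)
    refine EReal.coe_nonpos.2 ?_
    rw [cutOff_not_mem (by simp [he])]
    linarith
  obtain ⟨p, hp, hFp, hrange⟩ := exists_baire_param_sigmaCompact hKc hne hF₁m
  rw [← hrange] at hcutK
  obtain ⟨L, hL, hLne, hFL, hLu⟩ := exists_compact_not_dom hliminf hF₁' hp hFp hcutK
  obtain ⟨μ, c, hμ, hc, hcL⟩ :=
    exists_separating_measure hconv hzero hKc hK hF₁ hL hLne hFL hLu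
  have hc0 : 0 ≤ c := by
    have := hc (fun _ => 0) continuous_const ⟨0, by simp⟩ ⟨_, hzero, fun x => by simp⟩
    simpa using this
  have hcF : c + a ≤ ∫ x, F x ∂μ := by
    have hFi := integrable_of_abs_le (μ := μ) hFm hF
    have hcut : Integrable (cutOff (C + 1) (fun x => F x - a) L) μ := by
      refine integrable_of_abs_le (C := C + 1)
        (Measurable.piecewise hL.measurableSet hF₁m measurable_const) fun x => abs_le.2
          ⟨neg_le_cutOff hF₁' L x, (cutOff_le hF₁' L x).trans (abs_le.1 (hF₁ x)).2⟩
    have h1 : ∫ x, cutOff (C + 1) (fun x => F x - a) L x ∂μ ≤ ∫ x, (F x - a) ∂μ :=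
      integral_mono hcut (hFi.sub (integrable_const a)) (cutOff_le hF₁' L)
    rw [integral_sub hFi (integrable_const a)] at h1
    simp only [integral_const, probReal_univ, one_smul] at h1
    linarith
  -- The scaling factor lies strictly between `1 / ∫ F dμ` and `1 / c` (which may be infinite).
  set t : ℝ := 1 / (c + a / 2) with ht
  have hpos : 0 < c + a / 2 := by linarith
  have ht0 : 0 < t := by positivity
  have htc : t * (c + a / 2) = 1 := by rw [ht]; field_simp
  refine ⟨ENNReal.ofReal t • μ,
    smul_mem_polar hsub hmono hreg hc ht0.le (by nlinarith), ?_⟩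
  have hfin : IsFiniteMeasure (ENNReal.ofReal t • μ) := μ.smul_finite ENNReal.ofReal_ne_top
  rw [ePair_coe (integrable_of_abs_le hFm hF), integral_smul_measure,
    ENNReal.toReal_ofReal ht0.le, smul_eq_mul]
  have : (1 : ℝ) < t * ∫ x, F x ∂μ := by
    have := mul_le_mul_of_nonneg_left hcF ht0.le
    nlinarith
  exact_mod_cast this

end Main

/-- **Corollary 2.5** in Bartl–Kupper, "A pointwise bipolar theorem": every monotone,
convex, regular, tight set `H ⊆ L⁰_{b-}` which is closed under `liminf` and contains the
constant function `0` satisfies `H = H°°`. -/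
theorem bipolar_tight_zero_mem
    {Ω : Type*} [MetricSpace Ω] [MeasurableSpace Ω] [BorelSpace Ω]
    (H : Set (Ω → EReal)) (hsub : H ⊆ L0b)
    (hmono : MonotoneB H) (hconv : ConvexB H)
    (hreg : RegularB H) (htight : TightB H)
    (hliminf : LiminfClosedB H) (hzero : (fun _ => (0 : EReal)) ∈ H) :
    H = bipolarB H := by
  ext f
  refine ⟨fun hf => ⟨hsub hf, fun μ hμ => hμ.2 f hf⟩, fun ⟨hf, hpol⟩ => ?_⟩
  obtain ⟨β, h0, hβ⟩ := exists_nonneg_lower_bound hf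
  refine hmono f hf (dom_of_forall_trunc hliminf h0 hβ fun n => ?_)
  by_contra hnot
  obtain ⟨μ, hμ, hlt⟩ := exists_polar_separating hsub hmono hconv hreg htight hliminf hzero
    (measurable_truncReal hf.1 n) (abs_truncReal_le h0 hβ n) hnot
  refine absurd (hpol μ hμ) (not_le.2 (hlt.trans_le (ePair_mono (fun x => ?_) μ)))
  rw [coe_truncReal hβ]
  exact min_le_left _ _
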